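/- arXiv:1706.04065 — 2 statements merged into one kernel-verified Lean document; each statement's English description precedes it below -/
import Mathlib

section
/- Let E be a graph embedding, e an edge of E, and E₀ = E − e the embedding obtained by deleting e. Then the genus of E₀ is at most the genus of E. Moreover, if e is incident with two distinct faces, or e is incident with a vertex of size 2, then the genera of E and E₀ are equal. -/
def FPF {F : Type*} (π : Equiv.Perm F) : Prop := π * π = 1 ∧ ∀ x, π x ≠ x

def orbSet {F : Type*} (S : Set (Equiv.Perm F)) (x : F) : Set F :=
  MulAction.orbit (Subgroup.closure S) x

noncomputable def orbCount {F : Type*} (S : Set (Equiv.Perm F)) : ℕ :=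
  Nat.card (MulAction.orbitRel.Quotient (Subgroup.closure S) F)

noncomputable def genus {F : Type*} (θ σ' φ' : Equiv.Perm F) : ℤ :=
  (orbCount {θ, σ'} : ℤ) - orbCount {σ', φ'} - orbCount {θ, φ'} + 2 * orbCount {θ, σ', φ'}

def IsGraphEmb {F : Type*} (θ σ' φ' : Equiv.Perm F) : Prop :=
  FPF θ ∧ FPF σ' ∧ FPF φ' ∧ ∀ x : F, Nat.card (orbSet {θ, σ'} x) = 4

def IsEdgeDeletion {F : Type*} (σ' φ' : Equiv.Perm F) (e : Set F)
    (θ₀ σ₀ φ₀ : Equiv.Perm {f : F // f ∉ e}) (θ : Equiv.Perm F) : Prop :=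
  (∀ a : {f : F // f ∉ e}, (θ₀ a : F) = θ a ∧ (σ₀ a : F) = σ' a) ∧
  (∀ a : {f : F // f ∉ e}, ∃ m : ℕ,
     ((φ' * σ') ^ m) (φ' a) ∉ e ∧ (∀ j < m, ((φ' * σ') ^ j) (φ' a) ∈ e) ∧
     (φ₀ a : F) = ((φ' * σ') ^ m) (φ' a))

/-!
Deleting the edge with flags `x`, `σ x`, `θ x`, `σ (θ x)` makes first `{x, σ x}` and then
`{θ x, σ (θ x)}` an orbit of `φ`, and then removes an edge that forms a component of its own.
The first change, if it is one, adds a vertex, keeps the edges, and can alter the number of faces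
only by merging the faces of `x` and `σ x` or by splitting a face; since a fixed-point-free
involution cannot act on a set of odd size, two distinct faces are always merged. Comparing with
the possible split of a component, the genus falls by `0`, `1` or `2`, and by `0` if `x` and `σ x`
lie on distinct faces. The second change can only separate the edge from the rest: one more vertex,
face and component, hence the same genus. The removed edge has two vertices, one face and one
component, and so contributes `1 - 2 - 1 + 2 = 0`. If the edge has an end of size two, one may
start from that end, and the first change is void.
-/

open Function Set Equiv

section Involution

variable {F : Type*} {π : Perm F} {A : Set F}

theorem FPF.involutive (hπ : FPF π) : Involutive π :=
  fun p => congrArg (fun g : Perm F => g p) hπ.1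

theorem apply_mem_iff_of_mapsTo (hπ : Involutive π) (hA : MapsTo π A A) (p : F) :
    π p ∈ A ↔ p ∈ A :=
  ⟨fun h => hπ p ▸ hA h, fun h => hA h⟩

theorem FPF.even_ncard_of_mapsTo [Finite F] (hπ : FPF π) (hA : MapsTo π A A) : Even A.ncard := by
  classical
  have := Fintype.ofFinite F
  let τ : Perm A := π.subtypePerm (apply_mem_iff_of_mapsTo hπ.involutive hA)
  have hτ : τ ^ 2 = 1 := by
    ext p
    simp only [sq, Perm.mul_apply, Perm.one_apply]
    exact hπ.involutive p
  have hsupp : τ.support = Finset.univ := by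
    ext p
    simpa [τ, Subtype.ext_iff] using hπ.2 p
  have h := Perm.two_dvd_card_support hτ
  rw [hsupp, Finset.card_univ, ← Nat.card_eq_fintype_card, Nat.card_coe_set_eq] at h
  exact even_iff_two_dvd.2 h

end Involution

section Link

variable {F : Type*}

/-- The finest equivalence relation identifying `u` and `v`; taking `r ⊔ link u v` merges the
classes of `u` and `v` in `r`. -/
def link (u v : F) : Setoid F :=
  Relation.EqvGen.setoid fun p q => p = u ∧ q = v

variable {u v : F} {r : Setoid F}

theorem link_le_iff : link u v ≤ r ↔ r u v := by
  refine ⟨fun h => h (Relation.EqvGen.rel _ _ ⟨rfl, rfl⟩), fun h => Setoid.eqvGen_le ?_⟩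
  rintro _ _ ⟨rfl, rfl⟩
  exact h

open Classical in
theorem sup_link_eq_ker :
    r ⊔ link u v = Setoid.ker (update id (Quotient.mk r v) (Quotient.mk r u) ∘ Quotient.mk r) := by
  apply le_antisymm
  · refine sup_le (fun p q h => ?_) (link_le_iff.2 ?_)
    · exact congrArg (update id _ _) (Quotient.sound h)
    · by_cases h : Quotient.mk r u = Quotient.mk r v <;> simp [h, Setoid.ker_def]
  · intro p q h
    let m : Quotient r → Quotient (r ⊔ link u v) := Setoid.map_of_le le_sup_left
    have hm : ∀ c, m (update id (Quotient.mk r v) (Quotient.mk r u) c) = m c := by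
      intro c
      obtain rfl | hc := eq_or_ne c (Quotient.mk r v)
      · rw [update_self]
        exact Quotient.sound (link_le_iff.1 (le_sup_right (a := r)))
      · rw [update_of_ne hc, id]
    have hpq : m (Quotient.mk r p) = m (Quotient.mk r q) := by
      rw [← hm, ← hm (Quotient.mk r q)]
      exact congrArg m h
    exact Quotient.exact hpq

theorem card_quotient_sup_link_add_one [Finite F] (h : ¬ r u v) :
    Nat.card (Quotient (r ⊔ link u v)) + 1 = Nat.card (Quotient r) := by
  classical
  have hne : Quotient.mk r u ≠ Quotient.mk r v := fun k => h (Quotient.exact k)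
  have hrange : range (update id (Quotient.mk r v) (Quotient.mk r u) ∘ Quotient.mk r) =
      {Quotient.mk r v}ᶜ := by
    rw [Quotient.mk_surjective.range_comp]
    ext c
    simp only [mem_range, mem_compl_singleton_iff]
    refine ⟨?_, fun hc => ⟨c, update_of_ne hc _ _⟩⟩
    rintro ⟨b, rfl⟩
    obtain rfl | hb := eq_or_ne b (Quotient.mk r v)
    · rwa [update_self]
    · rwa [update_of_ne hb]
  rw [sup_link_eq_ker, Nat.card_congr (Setoid.quotientKerEquivRange _), hrange,
    Nat.card_coe_set_eq, ← ncard_singleton (Quotient.mk r v), ncard_compl_add_ncard]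

open Classical in
theorem card_quotient_sup_link [Finite F] :
    Nat.card (Quotient (r ⊔ link u v)) + (if r u v then 0 else 1) = Nat.card (Quotient r) := by
  split_ifs with h
  · rw [sup_eq_left.2 (link_le_iff.2 h), add_zero]
  · exact card_quotient_sup_link_add_one h

end Link

section Orbits

variable {F : Type*}

/-- The equivalence relation whose classes are the sets `orbSet S x`. -/
def orbRel (S : Set (Perm F)) : Setoid F :=
  MulAction.orbitRel (Subgroup.closure S) F

variable {S T : Set (Perm F)} {s σ φ : Perm F} {x : F} {A : Set F}

theorem orbCount_eq_card_quotient : orbCount S = Nat.card (Quotient (orbRel S)) :=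
  rfl

theorem orbRel_le_iff {r : Setoid F} : orbRel S ≤ r ↔ ∀ s ∈ S, ∀ p, r p (s p) := by
  refine ⟨fun h s hs p => r.symm (h ⟨⟨s, Subgroup.subset_closure hs⟩, rfl⟩), fun h => ?_⟩
  rintro _ q ⟨⟨g, hg⟩, rfl⟩
  change r (g q) q
  induction hg using Subgroup.closure_induction generalizing q with
  | mem s hs => exact r.symm (h s hs q)
  | one => exact r.refl q
  | mul a b _ _ iha ihb => exact r.trans (iha (q := b q)) (ihb (q := q))
  | inv a _ iha => exact r.symm (by simpa using iha (q := a⁻¹ q))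

theorem orbRel_apply (hs : s ∈ S) (p : F) : orbRel S p (s p) :=
  orbRel_le_iff.1 le_rfl s hs p

theorem orbRel_mono (h : S ⊆ T) : orbRel S ≤ orbRel T :=
  orbRel_le_iff.2 fun _ hs => orbRel_apply (h hs)

theorem orbRel_union : orbRel (S ∪ T) = orbRel S ⊔ orbRel T := by
  refine le_antisymm (orbRel_le_iff.2 ?_)
    (sup_le (orbRel_mono subset_union_left) (orbRel_mono subset_union_right))
  rintro s (hs | hs) p
  · exact le_sup_left (a := orbRel S) (orbRel_apply hs p)
  · exact le_sup_right (a := orbRel S) (orbRel_apply hs p)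

theorem mem_iff_of_orbRel (hA : ∀ s ∈ S, ∀ p, s p ∈ A ↔ p ∈ A) {p q : F} (h : orbRel S p q) :
    p ∈ A ↔ q ∈ A := by
  have hle : orbRel S ≤ Setoid.ker (· ∈ A) :=
    orbRel_le_iff.2 fun s hs p => propext (hA s hs p).symm
  exact iff_of_eq (hle h)

theorem orbSet_subset (hA : ∀ s ∈ S, ∀ p, s p ∈ A ↔ p ∈ A) (hx : x ∈ A) : orbSet S x ⊆ A :=
  fun _ hp => (mem_iff_of_orbRel hA hp).2 hx

theorem mem_orbSet_self : x ∈ orbSet S x :=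
  MulAction.mem_orbit_self x

theorem orbSet_eq_iff {p q : F} : orbSet S p = orbSet S q ↔ p ∈ orbSet S q :=
  MulAction.orbit_eq_iff

theorem apply_mem_orbSet_iff (hs : s ∈ S) (p : F) : s p ∈ orbSet S x ↔ p ∈ orbSet S x :=
  ⟨(orbRel S).trans (orbRel_apply hs p), (orbRel S).trans ((orbRel S).symm (orbRel_apply hs p))⟩

theorem orbSet_pair_eq_of_apply_eq (hσ : Involutive σ) (hφ : Involutive φ) (h : φ x = σ x) :
    orbSet {σ, φ} x = {x, σ x} := by
  have hφσ : φ (σ x) = x := h ▸ hφ x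
  refine (orbSet_subset ?_ (mem_insert x _)).antisymm (pair_subset mem_orbSet_self
    ((apply_mem_orbSet_iff (by simp) x).2 mem_orbSet_self))
  rintro s (rfl | rfl)
  · refine apply_mem_iff_of_mapsTo hσ ?_
    rintro p (rfl | rfl) <;> simp [hσ _]
  · refine apply_mem_iff_of_mapsTo hφ ?_
    rintro p (rfl | rfl) <;> simp [h, hφσ]

theorem FPF.apply_eq_of_card_orbSet_pair_eq_two (hσ : FPF σ) (hφ : FPF φ)
    (h : Nat.card (orbSet {σ, φ} x) = 2) : φ x = σ x := by
  by_contra hne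
  have hsub : {x, σ x, φ x} ⊆ orbSet {σ, φ} x := by
    rintro p (rfl | rfl | rfl)
    · exact mem_orbSet_self
    all_goals exact (apply_mem_orbSet_iff (by simp) x).2 mem_orbSet_self
  have hthree : ({x, σ x, φ x} : Set F).ncard = 3 :=
    ncard_eq_three.2 ⟨_, _, _, (hσ.2 x).symm, (hφ.2 x).symm, Ne.symm hne, rfl⟩
  rw [Nat.card_coe_set_eq] at h
  have := ncard_le_ncard hsub (finite_of_ncard_ne_zero (by omega))
  omega

end Orbits

section Restriction

variable {F G : Type*} {i : G → F} {S : Set (Perm F)} {S₀ : Set (Perm G)} {e : Set F}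

theorem apply_mem_range_iff_of_semiconj {s : Perm F} {s₀ : Perm G} (h : Semiconj i s₀ s) (p : F) :
    s p ∈ range i ↔ p ∈ range i := by
  constructor
  · rintro ⟨a, ha⟩
    refine ⟨s₀.symm a, s.injective ?_⟩
    rw [← h, apply_symm_apply, ha]
  · rintro ⟨a, rfl⟩
    exact ⟨s₀ a, h a⟩

theorem orbRel_eq_comap (hi : Injective i) (hS₀ : ∀ s₀ ∈ S₀, ∃ s ∈ S, Semiconj i s₀ s)
    (hS : ∀ s ∈ S, ∃ s₀ ∈ S₀, Semiconj i s₀ s) : orbRel S₀ = (orbRel S).comap i := by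
  apply le_antisymm
  · refine orbRel_le_iff.2 fun s₀ hs₀ a => ?_
    obtain ⟨s, hs, h⟩ := hS₀ s₀ hs₀
    rw [Setoid.comap_rel, h a]
    exact orbRel_apply hs (i a)
  · -- Sends `i a` to the class of `a` and collapses everything outside `range i` to `none`.
    let f : F → Option (Quotient (orbRel S₀)) :=
      extend i (some ∘ Quotient.mk (orbRel S₀)) fun _ => none
    have hfi : ∀ a, f (i a) = some (Quotient.mk _ a) := hi.extend_apply _ _
    have hfn : ∀ p ∉ range i, f p = none := extend_apply' _ _
    have hf : orbRel S ≤ Setoid.ker f := by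
      refine orbRel_le_iff.2 fun s hs p => ?_
      obtain ⟨s₀, hs₀, h⟩ := hS s hs
      rw [Setoid.ker_def]
      by_cases hp : p ∈ range i
      · obtain ⟨a, rfl⟩ := hp
        rw [← h a, hfi, hfi]
        exact congrArg some (Quotient.sound (orbRel_apply hs₀ a))
      · rw [hfn p hp, hfn (s p) (mt (apply_mem_range_iff_of_semiconj h p).1 hp)]
    intro a b hab
    have hfab : f (i a) = f (i b) := hf hab
    rw [hfi, hfi] at hfab
    exact Quotient.exact (Option.some_injective _ hfab)

theorem image_mk_compl {r : Setoid F} (he : ∀ p q, r p q → (p ∈ e ↔ q ∈ e)) :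
    Quotient.mk r '' eᶜ = (Quotient.mk r '' e)ᶜ := by
  refine subset_antisymm ?_ (subset_image_compl Quotient.mk_surjective)
  rintro _ ⟨p, hp, rfl⟩ ⟨q, hq, hqp⟩
  exact hp ((he q p (Quotient.exact hqp)).1 hq)

theorem orbCount_add_ncard_image [Finite F] {S₀ : Set (Perm {p // p ∉ e})}
    (hS₀ : ∀ s₀ ∈ S₀, ∃ s ∈ S, Semiconj Subtype.val s₀ s)
    (hS : ∀ s ∈ S, ∃ s₀ ∈ S₀, Semiconj Subtype.val s₀ s) :
    orbCount S₀ + (Quotient.mk (orbRel S) '' e).ncard = orbCount S := by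
  have hinv : ∀ s ∈ S, ∀ p, s p ∈ e ↔ p ∈ e := by
    intro s hs p
    obtain ⟨s₀, -, h⟩ := hS s hs
    simpa using (apply_mem_range_iff_of_semiconj h p).not
  have hrange : range (Quotient.mk (orbRel S) ∘ (Subtype.val : {p // p ∉ e} → F)) =
      (Quotient.mk (orbRel S) '' e)ᶜ := by
    rw [range_comp, Subtype.range_coe_subtype]
    exact image_mk_compl fun _ _ => mem_iff_of_orbRel hinv
  have hcard : orbCount S₀ = (Quotient.mk (orbRel S) '' e)ᶜ.ncard := by
    rw [← hrange, ← Nat.card_coe_set_eq, orbCount_eq_card_quotient,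
      orbRel_eq_comap Subtype.val_injective hS₀ hS]
    exact Nat.card_congr (Setoid.comapQuotientEquiv _ _)
  rw [hcard, ncard_compl_add_ncard, orbCount_eq_card_quotient]

end Restriction

section Switch

variable {F : Type*} [DecidableEq F] {φ σ θ : Perm F} {x z : F}

/-- For an involution `φ`, the involution in which the orbits `{x, φ x}` and `{z, φ z}` are replaced
by `{x, z}` and `{φ x, φ z}`. It is encoded as a conjugate of `φ` by a transposition, which also
gives `φ` itself when `z = φ x`. -/
def switch (φ : Perm F) (x z : F) : Perm F :=
  swap (φ x) z * φ * swap (φ x) z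

theorem switch_apply (p : F) : switch φ x z p = swap (φ x) z (φ (swap (φ x) z p)) :=
  rfl

theorem switch_eq_self : switch φ x (φ x) = φ := by
  simp [switch, ← Perm.one_def]

theorem switch_apply_self (hx : φ x ≠ x) (hz : z ≠ x) : switch φ x z x = z := by
  rw [switch_apply, swap_apply_of_ne_of_ne hx.symm hz.symm, swap_apply_left]

theorem switch_switch (hx : φ x ≠ x) (hz : z ≠ x) : switch (switch φ x z) x (φ x) = φ := by
  rw [switch, switch_apply_self hx hz, switch, swap_comm z]
  simp [mul_assoc]

theorem FPF.fpf_switch (hφ : FPF φ) : FPF (switch φ x z) := by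
  refine ⟨?_, fun p hp => hφ.2 (swap (φ x) z p) ((swap (φ x) z).injective ?_)⟩
  · ext p
    simp [switch_apply, hφ.involutive _]
  · rwa [swap_apply_self]

theorem orbRel_switch_le : orbRel {switch φ x z} ≤ orbRel {φ} ⊔ link x z := by
  set r := orbRel {φ} ⊔ link x z
  have hφ : ∀ p, r p (φ p) :=
    fun p => le_sup_left (a := orbRel {φ}) (orbRel_apply (mem_singleton φ) p)
  have hz : r (φ x) z := r.trans (r.symm (hφ x)) (link_le_iff.1 le_sup_right)
  have hswap : ∀ p, r p (swap (φ x) z p) := by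
    intro p
    obtain rfl | hp := eq_or_ne p (φ x)
    · rwa [swap_apply_left]
    obtain rfl | hp' := eq_or_ne p z
    · rw [swap_apply_right]
      exact r.symm hz
    · rw [swap_apply_of_ne_of_ne hp hp']
  rw [orbRel_le_iff]
  rintro _ rfl p
  exact r.trans (r.trans (hswap p) (hφ _)) (hswap _)

theorem orbRel_sup_link_eq (hx : φ x ≠ x) (hz : z ≠ x) :
    orbRel {φ} ⊔ link x z = orbRel {switch φ x z} ⊔ link x (φ x) := by
  have hφ : orbRel {φ} ≤ orbRel {switch φ x z} ⊔ link x (φ x) := by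
    conv_lhs => rw [← switch_switch hx hz]
    exact orbRel_switch_le
  have hxz : orbRel {switch φ x z} x z := by
    have h := orbRel_apply (mem_singleton (switch φ x z)) x
    rwa [switch_apply_self hx hz] at h
  exact le_antisymm (sup_le hφ (le_sup_of_le_left (link_le_iff.2 hxz)))
    (sup_le orbRel_switch_le (le_sup_of_le_left (link_le_iff.2 (orbRel_apply (mem_singleton φ) x))))

open Classical in
theorem orbCount_switch [Finite F] (hx : φ x ≠ x) (hz : z ≠ x) (S : Set (Perm F)) :
    orbCount (S ∪ {switch φ x z}) + (if orbRel (S ∪ {φ}) x z then 0 else 1) =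
      orbCount (S ∪ {φ}) + (if orbRel (S ∪ {switch φ x z}) x (φ x) then 0 else 1) := by
  have hlink : orbRel (S ∪ {φ}) ⊔ link x z = orbRel (S ∪ {switch φ x z}) ⊔ link x (φ x) := by
    simp only [orbRel_union, sup_assoc, orbRel_sup_link_eq hx hz]
  have hφ := card_quotient_sup_link (r := orbRel (S ∪ {φ})) (u := x) (v := z)
  have hφ' := card_quotient_sup_link (r := orbRel (S ∪ {switch φ x z})) (u := x) (v := φ x)
  rw [hlink] at hφ
  rw [orbCount_eq_card_quotient, orbCount_eq_card_quotient, ← hφ, ← hφ']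
  ring

-- Otherwise `θ` would act on the common part of the two face classes of `x`, and `φ` would act on
-- that part with `x` removed, both without fixed points.
theorem orbRel_switch_or_orbRel [Finite F] (hθ : FPF θ) (hφ : FPF φ) :
    orbRel {θ, switch φ x z} x (φ x) ∨ orbRel {θ, φ} x z := by
  by_contra! ⟨hnew, hold⟩
  set rnew := orbRel {θ, switch φ x z}
  set rold := orbRel {θ, φ}
  have hθnew : ∀ p, rnew p (θ p) := orbRel_apply (by simp)
  have hθold : ∀ p, rold p (θ p) := orbRel_apply (by simp)
  have hφnew : ∀ p, rnew p (switch φ x z p) := orbRel_apply (by simp)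
  have hφold : ∀ p, rold p (φ p) := orbRel_apply (by simp)
  let A : Set F := {p | rnew x p ∧ rold x p}
  have hxA : x ∈ A := ⟨rnew.refl x, rold.refl x⟩
  have hAθ : MapsTo θ A A := fun p hp =>
    ⟨rnew.trans hp.1 (hθnew p), rold.trans hp.2 (hθold p)⟩
  have hAφ : MapsTo φ (A \ {x}) (A \ {x}) := by
    rintro p ⟨⟨hpnew, hpold⟩, hpx⟩
    have hpφx : p ≠ φ x := fun h => hnew (h ▸ hpnew)
    have hpz : p ≠ z := fun h => hold (h ▸ hpold)
    have hφp : rold x (φ p) := rold.trans hpold (hφold p)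
    have hφpz : φ p ≠ z := fun h => hold (h ▸ hφp)
    have hφpx : φ p ≠ x := fun h => hpφx (h ▸ (hφ.involutive p).symm)
    have hswitch : switch φ x z p = φ p := by
      rw [switch_apply, swap_apply_of_ne_of_ne hpφx hpz,
        swap_apply_of_ne_of_ne (fun h => hpx (φ.injective h)) hφpz]
    exact ⟨⟨rnew.trans hpnew (hswitch ▸ hφnew p), hφp⟩, hφpx⟩
  have hcard : (A \ {x}).ncard + 1 = A.ncard := ncard_sdiff_singleton_add_one hxA
  have heven : Even A.ncard := hθ.even_ncard_of_mapsTo hAθ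
  rw [← hcard, Nat.even_add_one] at heven
  exact heven (hφ.even_ncard_of_mapsTo hAφ)

theorem orbCount_vertices_switch [Finite F] (hσ : FPF σ) (hφ : FPF φ) (hx : φ x ≠ σ x) :
    orbCount {σ, switch φ x (σ x)} = orbCount {σ, φ} + 1 := by
  have hpair : orbSet {σ, switch φ x (σ x)} x = {x, σ x} :=
    orbSet_pair_eq_of_apply_eq hσ.involutive hφ.fpf_switch.involutive
      (switch_apply_self (hφ.2 x) (hσ.2 x))
  have hold : orbRel {σ, φ} x (σ x) := orbRel_apply (by simp) x
  have hnew : ¬ orbRel {σ, switch φ x (σ x)} x (φ x) := by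
    intro h
    have hmem : φ x ∈ orbSet {σ, switch φ x (σ x)} x := Setoid.symm' _ h
    rw [hpair] at hmem
    exact hmem.elim (hφ.2 x) hx
  have h := orbCount_switch (hφ.2 x) (hσ.2 x) {σ}
  rwa [singleton_union, singleton_union, if_pos hold, if_neg hnew] at h

open Classical in
theorem genus_switch [Finite F] (hθ : FPF θ) (hσ : FPF σ) (hφ : FPF φ) (hx : φ x ≠ σ x) :
    genus θ σ (switch φ x (σ x)) =
      genus θ σ φ - if orbRel {θ, switch φ x (σ x)} x (φ x) then
        (if orbRel {θ, φ} x (σ x) then 1 else 0)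
      else (if orbRel {θ, σ, switch φ x (σ x)} x (φ x) then 2 else 0) := by
  have hsub : orbRel {θ, switch φ x (σ x)} x (φ x) → orbRel {θ, σ, switch φ x (σ x)} x (φ x) :=
    fun h => orbRel_mono (insert_subset_insert (subset_insert _ _)) h
  have hold : orbRel {θ, σ, φ} x (σ x) := orbRel_apply (by simp) x
  have hV := orbCount_vertices_switch hσ hφ hx
  have hF := orbCount_switch (hφ.2 x) (hσ.2 x) {θ}
  have hC := orbCount_switch (hφ.2 x) (hσ.2 x) {θ, σ}
  have hparity := orbRel_switch_or_orbRel (x := x) (z := σ x) hθ hφ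
  rw [singleton_union, singleton_union] at hF
  rw [insert_union, insert_union, singleton_union, singleton_union, if_pos hold] at hC
  unfold genus
  split_ifs at hF hC ⊢ <;> first | omega | tauto

theorem genus_switch_le [Finite F] (hθ : FPF θ) (hσ : FPF σ) (hφ : FPF φ) :
    genus θ σ (switch φ x (σ x)) ≤ genus θ σ φ := by
  by_cases hx : φ x = σ x
  · rw [← hx, switch_eq_self]
  · rw [genus_switch hθ hσ hφ hx]
    split_ifs <;> omega

theorem genus_switch_eq_of_not_orbRel_faces [Finite F] (hθ : FPF θ) (hσ : FPF σ) (hφ : FPF φ)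
    (h : ¬ orbRel {θ, φ} x (σ x)) : genus θ σ (switch φ x (σ x)) = genus θ σ φ := by
  have hx : φ x ≠ σ x := fun hx => h (hx ▸ orbRel_apply (by simp) x)
  rw [genus_switch hθ hσ hφ hx, if_pos ((orbRel_switch_or_orbRel hθ hφ).resolve_right h),
    if_neg h, sub_zero]

theorem genus_switch_eq_of_not_orbRel_components [Finite F] (hθ : FPF θ) (hσ : FPF σ) (hφ : FPF φ)
    (h : ¬ orbRel {θ, σ, switch φ x (σ x)} x (φ x)) :
    genus θ σ (switch φ x (σ x)) = genus θ σ φ := by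
  have hσ' : orbRel {θ, σ, switch φ x (σ x)} x (σ x) := orbRel_apply (by simp) x
  have hx : φ x ≠ σ x := fun hx => h (hx.symm ▸ hσ')
  have hface : ¬ orbRel {θ, switch φ x (σ x)} x (φ x) :=
    fun hface => h (orbRel_mono (insert_subset_insert (subset_insert _ _)) hface)
  rw [genus_switch hθ hσ hφ hx, if_neg hface, if_neg h, sub_zero]

end Switch

section Edge

variable {F : Type*} {θ σ φ : Perm F} {x : F}

theorem FPF.apply_ne_of_card_orbSet_pair_eq_four (hθ : FPF θ) (hσ : FPF σ)
    (hx : Nat.card (orbSet {θ, σ} x) = 4) : θ x ≠ σ x := by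
  intro h
  rw [orbSet_pair_eq_of_apply_eq hθ.involutive hσ.involutive h.symm, Nat.card_coe_set_eq,
    ncard_pair (hθ.2 x).symm] at hx
  omega

theorem FPF.orbSet_pair_eq_of_card_eq_four (hθ : FPF θ) (hσ : FPF σ)
    (hx : Nat.card (orbSet {θ, σ} x) = 4) : orbSet {θ, σ} x = {x, σ x, θ x, σ (θ x)} := by
  have hne := hθ.apply_ne_of_card_orbSet_pair_eq_four hσ hx
  have hθmem (p : F) : θ p ∈ orbSet {θ, σ} x ↔ p ∈ orbSet {θ, σ} x :=
    apply_mem_orbSet_iff (by simp) p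
  have hσmem (p : F) : σ p ∈ orbSet {θ, σ} x ↔ p ∈ orbSet {θ, σ} x :=
    apply_mem_orbSet_iff (by simp) p
  have hsub : {x, σ x, θ x, σ (θ x)} ⊆ orbSet {θ, σ} x := by
    rintro p (rfl | rfl | rfl | rfl) <;> simp [hθmem, hσmem, mem_orbSet_self]
  have hσθ : x ≠ σ (θ x) := fun h => hne (hσ.involutive.eq_iff.1 h.symm)
  have hthree : ({σ x, θ x, σ (θ x)} : Set F).ncard = 3 :=
    ncard_eq_three.2 ⟨_, _, _, hne.symm, fun h => hθ.2 x (σ.injective h).symm,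
      (hσ.2 (θ x)).symm, rfl⟩
  have hxmem : x ∉ ({σ x, θ x, σ (θ x)} : Set F) := by
    rintro (h | h | h)
    exacts [hσ.2 x h.symm, hθ.2 x h.symm, hσθ h]
  have hfour : ({x, σ x, θ x, σ (θ x)} : Set F).ncard = 4 := by
    rw [ncard_insert_of_notMem hxmem, hthree]
  rw [Nat.card_coe_set_eq] at hx
  exact (eq_of_subset_of_ncard_le hsub (by omega) (finite_of_ncard_ne_zero (by omega))).symm

theorem FPF.apply_comm_of_card_orbSet_pair_eq_four (hθ : FPF θ) (hσ : FPF σ)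
    (hx : Nat.card (orbSet {θ, σ} x) = 4) : θ (σ x) = σ (θ x) := by
  have hne := hθ.apply_ne_of_card_orbSet_pair_eq_four hσ hx
  have hmem : θ (σ x) ∈ orbSet {θ, σ} x :=
    (apply_mem_orbSet_iff (by simp) _).2 ((apply_mem_orbSet_iff (by simp) x).2 mem_orbSet_self)
  rw [hθ.orbSet_pair_eq_of_card_eq_four hσ hx] at hmem
  obtain h | h | h | h := hmem
  · exact absurd (hθ.involutive.eq_iff.1 h).symm hne
  · exact absurd h (hθ.2 _)
  · exact absurd (θ.injective h) (hσ.2 x)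
  · exact h

theorem ncard_image_mk_eq_one {r : Setoid F} {e : Set F} (hx : x ∈ e) (h : ∀ p ∈ e, r x p) :
    (Quotient.mk r '' e).ncard = 1 := by
  refine ncard_eq_one.2 ⟨Quotient.mk r x, (subset_singleton_iff.2 ?_).antisymm ?_⟩
  · rintro _ ⟨p, hp, rfl⟩
    exact Quotient.sound (r.symm (h p hp))
  · exact singleton_subset_iff.2 (mem_image_of_mem _ hx)

theorem orbRel_of_mem_edge {S : Set (Perm F)} {s : Perm F} (hθ : θ ∈ S) (hs : s ∈ S)
    (hsσ : ∀ p ∈ ({x, σ x, θ x, σ (θ x)} : Set F), s p = σ p) :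
    ∀ p ∈ ({x, σ x, θ x, σ (θ x)} : Set F), orbRel S x p := by
  have hx : orbRel S x (σ x) := hsσ x (by simp) ▸ orbRel_apply hs x
  have hθx : orbRel S x (θ x) := orbRel_apply hθ x
  have hσθ : orbRel S (θ x) (σ (θ x)) := hsσ (θ x) (by simp) ▸ orbRel_apply hs (θ x)
  rintro p (rfl | rfl | rfl | rfl)
  exacts [Setoid.refl' _ _, hx, hθx, Setoid.trans' _ hθx hσθ]

theorem FPF.ncard_image_mk_vertices_edge (hθ : FPF θ) (hσ : FPF σ) (hφ : FPF φ) (hne : θ x ≠ σ x)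
    (hφσ : ∀ p ∈ ({x, σ x, θ x, σ (θ x)} : Set F), φ p = σ p) :
    (Quotient.mk (orbRel {σ, φ}) '' {x, σ x, θ x, σ (θ x)}).ncard = 2 := by
  have hmk (p : F) : Quotient.mk (orbRel {σ, φ}) (σ p) = Quotient.mk (orbRel {σ, φ}) p :=
    Quotient.sound (Setoid.symm' _ (orbRel_apply (by simp) p))
  have hpair : orbSet {σ, φ} x = {x, σ x} :=
    orbSet_pair_eq_of_apply_eq hσ.involutive hφ.involutive (hφσ x (by simp))
  have hdisj : Quotient.mk (orbRel {σ, φ}) (θ x) ≠ Quotient.mk (orbRel {σ, φ}) x := by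
    intro h
    have hmem : θ x ∈ orbSet {σ, φ} x := Quotient.exact h
    rw [hpair] at hmem
    exact hmem.elim (hθ.2 x) hne
  simp only [image_insert_eq, image_singleton, hmk, pair_eq_singleton, insert_idem]
  exact ncard_pair hdisj.symm

theorem FPF.card_image_faces_edge (hθ : FPF θ) (hσ : FPF σ)
    (hx : Nat.card (orbSet {θ, σ} x) = 4) (h : orbRel {θ, φ} x (σ x)) :
    Nat.card ((fun f => orbSet {θ, φ} f) '' orbSet {θ, σ} x) = 1 := by
  have hmk (p : F) : orbSet {θ, φ} (θ p) = orbSet {θ, φ} p :=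
    orbSet_eq_iff.2 ((apply_mem_orbSet_iff (by simp) p).2 mem_orbSet_self)
  have hσx : orbSet {θ, φ} (σ x) = orbSet {θ, φ} x := (orbSet_eq_iff.2 h).symm
  rw [hθ.orbSet_pair_eq_of_card_eq_four hσ hx,
    ← hθ.apply_comm_of_card_orbSet_pair_eq_four hσ hx, Nat.card_coe_set_eq]
  simp only [image_insert_eq, image_singleton, hmk, hσx, pair_eq_singleton, ncard_singleton]

end Edge

section FirstExit

variable {α : Type*} {f g k : α → α} {e : Set α} {u b : α}

/-- `FirstExit f e u b` means that `b` is the first of `u, f u, f (f u), …` lying outside `e`. -/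
inductive FirstExit (f : α → α) (e : Set α) : α → α → Prop
  | of_notMem {u : α} (hu : u ∉ e) : FirstExit f e u u
  | step {u b : α} (hu : u ∈ e) (h : FirstExit f e (f u) b) : FirstExit f e u b

theorem FirstExit.of_iterate {m : ℕ} (hm : f^[m] u ∉ e) (hlt : ∀ j < m, f^[j] u ∈ e) :
    FirstExit f e u (f^[m] u) := by
  induction m generalizing u with
  | zero => exact .of_notMem hm
  | succ m ih =>
    exact .step (hlt 0 m.succ_pos) (ih hm fun j hj => hlt (j + 1) (Nat.succ_lt_succ hj))

theorem FirstExit.eq_of_notMem (h : FirstExit f e u b) (hu : u ∉ e) : b = u := by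
  cases h with
  | of_notMem => rfl
  | step hu' => exact absurd hu' hu

theorem FirstExit.map (h : FirstExit f e u b) (hk : ∀ u ∉ e, k u = u)
    (hstep : ∀ u ∈ e, k u = k (f u) ∨ k u ∈ e ∧ g (k u) = k (f u)) : FirstExit g e (k u) b := by
  induction h with
  | of_notMem hu => exact (hk _ hu).symm ▸ .of_notMem hu
  | step hu _ ih =>
    obtain h | ⟨hmem, h⟩ := hstep _ hu
    · exact h ▸ ih
    · exact .step hmem (h ▸ ih)

end FirstExit

section Isolate

variable {F : Type*} [DecidableEq F] {φ σ θ : Perm F} {x y z p a b : F} {e : Set F}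

/-- The effect on the values of an involution `φ` of making `{x, z}` one of its orbits: a value `x`
or `z` is replaced by the partner of the other element. -/
def bypass (φ : Perm F) (x z u : F) : F :=
  if u = x then φ z else if u = z then φ x else u

theorem bypass_of_ne (hx : p ≠ x) (hz : p ≠ z) : bypass φ x z p = p := by
  rw [bypass, if_neg hx, if_neg hz]

theorem FPF.bypass_apply_left (hφ : FPF φ) (x z : F) : bypass φ x z (φ x) = φ x := by
  rw [bypass, if_neg (hφ.2 x)]
  split_ifs <;> rfl

theorem FPF.bypass_apply_right (hφ : FPF φ) (x z : F) : bypass φ x z (φ z) = φ z := by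
  rw [bypass, if_neg (hφ.2 z)]
  split_ifs <;> rfl

theorem FPF.switch_apply_eq_bypass (hφ : FPF φ) (hz : z ≠ x) (hpx : p ≠ x) (hpz : p ≠ z) :
    switch φ x z p = bypass φ x z (φ p) := by
  obtain rfl | hp := eq_or_ne p (φ x)
  · have hne : φ z ≠ φ x := φ.injective.ne hz
    rw [switch_apply, swap_apply_left, swap_apply_of_ne_of_ne hne (hφ.2 z), hφ.involutive,
      bypass, if_pos rfl]
  have hφp : φ p ≠ x := fun h => hp (hφ.involutive.eq_iff.1 h)
  rw [switch_apply, swap_apply_of_ne_of_ne hp hpz, bypass, if_neg hφp]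
  split_ifs with h
  · rw [h, swap_apply_right]
  · exact swap_apply_of_ne_of_ne (φ.injective.ne hpx) h

theorem FPF.switch_apply_of_mem (hσ : FPF σ) (hφ : FPF φ) (hp : p = x ∨ p = σ x) :
    switch φ x (σ x) p = σ p := by
  have hx : switch φ x (σ x) x = σ x := switch_apply_self (hφ.2 x) (hσ.2 x)
  obtain rfl | rfl := hp
  · exact hx
  · rw [hσ.involutive]
    exact (hφ.fpf_switch.involutive.eq_iff.1 hx).symm

theorem FPF.switch_apply_of_apply_eq (hσ : FPF σ) (hφ : FPF φ) (hp : φ p = σ p) :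
    switch φ x (σ x) p = σ p := by
  by_cases hmem : p = x ∨ p = σ x
  · exact hσ.switch_apply_of_mem hφ hmem
  obtain ⟨hpx, hpσx⟩ := not_or.1 hmem
  have hσp : σ p ≠ x := fun h => hpσx (hσ.involutive.eq_iff.1 h)
  rw [hφ.switch_apply_eq_bypass (hσ.2 x) hpx hpσx, hp, bypass_of_ne hσp (σ.injective.ne hpx)]

-- An iterate of `φ * σ` standing at `x` or `σ x` moves on to `φ (σ x)` or `φ x`, which is where
-- `bypass` has already sent it.
theorem FirstExit.switch (hσ : FPF σ) (hφ : FPF φ) (hx : x ∈ e) (hσx : σ x ∈ e) (ha : a ∉ e)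
    (h : FirstExit (φ * σ) e (φ a) b) :
    FirstExit (switch φ x (σ x) * σ) e (switch φ x (σ x) a) b := by
  have hne {u v : F} (hu : u ∉ e) (hv : v ∈ e) : u ≠ v := fun h => hu (h ▸ hv)
  rw [hφ.switch_apply_eq_bypass (hσ.2 x) (hne ha hx) (hne ha hσx)]
  refine h.map (fun u hu => bypass_of_ne (hne hu hx) (hne hu hσx)) fun u hu => ?_
  simp only [Perm.mul_apply]
  obtain rfl | hux := eq_or_ne u x
  · left
    rw [hφ.bypass_apply_right, bypass, if_pos rfl]
  obtain rfl | huσx := eq_or_ne u (σ x)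
  · left
    rw [hσ.involutive, hφ.bypass_apply_left, bypass, if_neg hux, if_pos rfl]
  · have hσu : σ u ≠ x := fun h => huσx (hσ.involutive.eq_iff.1 h)
    rw [bypass_of_ne hux huσx]
    exact .inr ⟨hu, hφ.switch_apply_eq_bypass (hσ.2 x) hσu (σ.injective.ne hux)⟩

/-- The involution obtained from `φ` by making first `{x, σ x}` and then `{y, σ y}` one of its
orbits; with `y = θ x` this is the first stage of the deletion of the edge of `x`. -/
def isolate (φ σ : Perm F) (x y : F) : Perm F :=
  switch (switch φ x (σ x)) y (σ y)

theorem FPF.fpf_isolate (hφ : FPF φ) : FPF (isolate φ σ x y) :=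
  hφ.fpf_switch.fpf_switch

theorem FPF.isolate_apply_of_mem (hσ : FPF σ) (hφ : FPF φ)
    (hp : p ∈ ({x, σ x, y, σ y} : Set F)) : isolate φ σ x y p = σ p := by
  obtain rfl | rfl | hp := hp
  · exact hσ.switch_apply_of_apply_eq hφ.fpf_switch (hσ.switch_apply_of_mem hφ (.inl rfl))
  · exact hσ.switch_apply_of_apply_eq hφ.fpf_switch (hσ.switch_apply_of_mem hφ (.inr rfl))
  · exact hσ.switch_apply_of_mem hφ.fpf_switch hp

theorem FPF.mapsTo_isolate (hσ : FPF σ) (hφ : FPF φ) :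
    MapsTo (isolate φ σ x y) {x, σ x, y, σ y} {x, σ x, y, σ y} := by
  intro p hp
  rw [hσ.isolate_apply_of_mem hφ hp]
  obtain rfl | rfl | rfl | rfl := hp <;> simp [hσ.involutive _]

theorem IsEdgeDeletion.apply_eq_isolate {θ₀ σ₀ φ₀ : Perm {f : F // f ∉ ({x, σ x, y, σ y} : Set F)}}
    (hσ : FPF σ) (hφ : FPF φ) (hdel : IsEdgeDeletion σ φ {x, σ x, y, σ y} θ₀ σ₀ φ₀ θ)
    (a : {f : F // f ∉ ({x, σ x, y, σ y} : Set F)}) : (φ₀ a : F) = isolate φ σ x y a := by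
  obtain ⟨m, hm, hlt, hφ₀⟩ := hdel.2 a
  simp only [← Perm.iterate_eq_pow] at hm hlt hφ₀
  have hexit : FirstExit (φ * σ) {x, σ x, y, σ y} (φ a) (φ₀ a) :=
    hφ₀ ▸ FirstExit.of_iterate hm hlt
  have hexit₂ : FirstExit (isolate φ σ x y * σ) {x, σ x, y, σ y} (isolate φ σ x y a) (φ₀ a) :=
    (hexit.switch hσ hφ (by simp) (by simp) a.2).switch hσ hφ.fpf_switch (by simp) (by simp) a.2
  exact hexit₂.eq_of_notMem fun h => a.2
    ((apply_mem_iff_of_mapsTo hφ.fpf_isolate.involutive (hσ.mapsTo_isolate hφ) a).1 h)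

end Isolate

section Deletion

variable {F : Type*} [Finite F] {θ σ φ : Perm F} {x : F}

theorem genus_eq_of_semiconj {θ₀ σ₀ φ₀ : Perm {f : F // f ∉ ({x, σ x, θ x, σ (θ x)} : Set F)}}
    (hθ : FPF θ) (hσ : FPF σ) (hφ : FPF φ) (hne : θ x ≠ σ x)
    (hφσ : ∀ p ∈ ({x, σ x, θ x, σ (θ x)} : Set F), φ p = σ p)
    (hθ₀ : Semiconj Subtype.val θ₀ θ) (hσ₀ : Semiconj Subtype.val σ₀ σ)
    (hφ₀ : Semiconj Subtype.val φ₀ φ) : genus θ₀ σ₀ φ₀ = genus θ σ φ := by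
  have hE := orbCount_add_ncard_image (S := {θ, σ}) (S₀ := {θ₀, σ₀})
    (by simp [hθ₀, hσ₀]) (by simp [hθ₀, hσ₀])
  have hV := orbCount_add_ncard_image (S := {σ, φ}) (S₀ := {σ₀, φ₀})
    (by simp [hσ₀, hφ₀]) (by simp [hσ₀, hφ₀])
  have hF := orbCount_add_ncard_image (S := {θ, φ}) (S₀ := {θ₀, φ₀})
    (by simp [hθ₀, hφ₀]) (by simp [hθ₀, hφ₀])
  have hC := orbCount_add_ncard_image (S := {θ, σ, φ}) (S₀ := {θ₀, σ₀, φ₀})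
    (by simp [hθ₀, hσ₀, hφ₀]) (by simp [hθ₀, hσ₀, hφ₀])
  have hx : x ∈ ({x, σ x, θ x, σ (θ x)} : Set F) := mem_insert _ _
  rw [ncard_image_mk_eq_one hx (orbRel_of_mem_edge (s := σ) (by simp) (by simp) (by simp))] at hE hC
  rw [ncard_image_mk_eq_one hx (orbRel_of_mem_edge (s := φ) (by simp) (by simp) hφσ)] at hF
  rw [hθ.ncard_image_mk_vertices_edge hσ hφ hne hφσ] at hV
  unfold genus
  omega

variable [DecidableEq F]

theorem genus_isolate (hθ : FPF θ) (hσ : FPF σ) (hφ : FPF φ)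
    (hx : Nat.card (orbSet {θ, σ} x) = 4) :
    genus θ σ (isolate φ σ x (θ x)) = genus θ σ (switch φ x (σ x)) := by
  set φ₁ := switch φ x (σ x) with hφ₁
  have hfpf : FPF φ₁ := hφ.fpf_switch
  by_cases hy : φ₁ (θ x) = σ (θ x)
  · rw [isolate, ← hφ₁, ← hy, switch_eq_self]
  have he := hθ.orbSet_pair_eq_of_card_eq_four hσ hx
  have hnot : φ₁ (θ x) ∉ orbSet {θ, σ} x := by
    have hne := hθ.apply_ne_of_card_orbSet_pair_eq_four hσ hx
    have hx₁ : φ₁ x = σ x := hσ.switch_apply_of_mem hφ (.inl rfl)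
    rw [he]
    rintro (h | h | h | h)
    · exact hne ((hfpf.involutive.eq_iff.1 h).trans hx₁)
    · exact hθ.2 x (φ₁.injective (h.trans hx₁.symm))
    · exact hfpf.2 _ h
    · exact hy h
  have hinv : ∀ s ∈ ({θ, σ, isolate φ σ x (θ x)} : Set (Perm F)), ∀ p,
      s p ∈ orbSet {θ, σ} x ↔ p ∈ orbSet {θ, σ} x := by
    rintro s (rfl | rfl | rfl)
    · exact apply_mem_orbSet_iff (by simp)
    · exact apply_mem_orbSet_iff (by simp)
    · exact apply_mem_iff_of_mapsTo hφ.fpf_isolate.involutive (he ▸ hσ.mapsTo_isolate hφ)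
  refine genus_switch_eq_of_not_orbRel_components hθ hσ hfpf fun h => hnot ?_
  exact (mem_iff_of_orbRel hinv h).1 ((apply_mem_orbSet_iff (by simp) x).2 mem_orbSet_self)

theorem genus_deletion {e : Set F} {θ₀ σ₀ φ₀ : Perm {f : F // f ∉ e}} (hθ : FPF θ) (hσ : FPF σ)
    (hφ : FPF φ) (hx : Nat.card (orbSet {θ, σ} x) = 4) (he : e = orbSet {θ, σ} x)
    (hdel : IsEdgeDeletion σ φ e θ₀ σ₀ φ₀ θ) :
    genus θ₀ σ₀ φ₀ = genus θ σ (switch φ x (σ x)) := by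
  rw [hθ.orbSet_pair_eq_of_card_eq_four hσ hx] at he
  subst he
  rw [← genus_isolate hθ hσ hφ hx]
  exact genus_eq_of_semiconj hθ hσ hφ.fpf_isolate (hθ.apply_ne_of_card_orbSet_pair_eq_four hσ hx)
    (fun _ => hσ.isolate_apply_of_mem hφ) (fun a => (hdel.1 a).1) (fun a => (hdel.1 a).2)
    (hdel.apply_eq_isolate hσ hφ)

end Deletion

theorem stmt7 {F : Type*} [Fintype F]
    (θ σ' φ' : Equiv.Perm F) (h : IsGraphEmb θ σ' φ') (x : F)
    (e : Set F) (he : e = orbSet {θ, σ'} x)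
    (θ₀ σ₀ φ₀ : Equiv.Perm {f : F // f ∉ e})
    (hdel : IsEdgeDeletion σ' φ' e θ₀ σ₀ φ₀ θ) :
    genus θ₀ σ₀ φ₀ ≤ genus θ σ' φ' ∧
    ((Nat.card ((fun f => orbSet {θ, φ'} f) '' e) = 2 ∨
        ∃ f ∈ e, Nat.card (orbSet {σ', φ'} f) = 2) →
      genus θ₀ σ₀ φ₀ = genus θ σ' φ') := by
  classical
  obtain ⟨hθ, hσ, hφ, hcard⟩ := h
  rw [genus_deletion hθ hσ hφ (hcard x) he hdel]
  refine ⟨genus_switch_le hθ hσ hφ, ?_⟩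
  rintro (hfaces | ⟨f, hf, hvertex⟩)
  · refine genus_switch_eq_of_not_orbRel_faces hθ hσ hφ fun hx => ?_
    rw [he, hθ.card_image_faces_edge hσ (hcard x) hx] at hfaces
    omega
  · have hef : e = orbSet {θ, σ'} f := he.trans (orbSet_eq_iff.2 (he.subset hf)).symm
    rw [← genus_deletion hθ hσ hφ (hcard x) he hdel, genus_deletion hθ hσ hφ (hcard f) hef hdel,
      ← hσ.apply_eq_of_card_orbSet_pair_eq_two hφ hvertex, switch_eq_self]
end

section
/- If E₀ is obtained from a graph embedding E by drawing a new edge, then the genus of E₀ is at least the genus of E. Furthermore, if the new edge is drawn along the boundary of a face, then the genera of E and E₀ are equal. -/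
/-!
The end `{x, σ x}` of an edge is detached from its vertex by conjugating `φ` with the transposition
of `x` and `φ (σ x)`. Gluing these two flags afterwards gives the same orbits whichever of the two
permutations one starts from, so the conjugation changes a number of orbits by at most one, and the
change is determined by whether the two flags share an orbit before and after. The vertex splits,
unless the end was alone at it, and a parity argument shows that the two flags share a face before
or after. Hence a component can split only together with a face, and the genus does not increase;
it is unchanged if the edge separated two faces.

After the first end of an edge has been detached, the edge is pendant, and detaching its second end
leaves the genus unchanged. The edge is then a component of genus zero, and deleting the edge from
the original embedding amounts to removing this component.
-/

namespace FPF

open Equiv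

variable {F : Type*} {π : Perm F}

theorem apply_apply (h : FPF π) (a : F) : π (π a) = a :=
  DFunLike.congr_fun h.1 a

theorem apply_eq_iff (h : FPF π) {a b : F} : π a = b ↔ a = π b :=
  Function.Involutive.eq_iff h.apply_apply

theorem apply_mem_iff (h : FPF π) {A : Set F} (hA : Set.MapsTo π A A) {a : F} :
    π a ∈ A ↔ a ∈ A :=
  ⟨fun ha => h.apply_apply a ▸ hA ha, fun ha => hA ha⟩

theorem mapsTo_pair (h : FPF π) (x : F) : Set.MapsTo π {x, π x} {x, π x} := by
  rintro _ (rfl | rfl) <;> simp [h.apply_apply]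

theorem conj (h : FPF π) (ρ : Perm F) : FPF (ρ * π * ρ⁻¹) := by
  refine ⟨?_, fun a ha => h.2 (ρ⁻¹ a) ?_⟩
  · rw [conj_mul, h.1, mul_one, mul_inv_cancel]
  · rwa [Perm.eq_inv_iff_eq]

theorem even_ncard [Finite F] (h : FPF π) {A : Set F} (hA : Set.MapsTo π A A) :
    Even A.ncard := by
  classical
  have := Fintype.ofFinite F
  let πA : Perm A := π.subtypePerm fun _ => h.apply_mem_iff hA
  have support_eq : πA.support = Finset.univ := by
    ext a
    simpa [πA, Subtype.ext_iff] using h.2 a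
  have sq_eq : πA ^ 2 = 1 := by
    ext a
    exact h.apply_apply a
  have := Perm.two_dvd_card_support sq_eq
  rwa [support_eq, Finset.card_univ, ← Nat.card_eq_fintype_card, Nat.card_coe_set_eq,
    ← even_iff_two_dvd] at this

end FPF

namespace GraphEmbedding

open Equiv Relation

variable {F : Type*}

section Glue

/-- The least equivalence relation identifying `a` and `b`: gluing these two points. -/
def glue (a b : F) : Setoid F := EqvGen.setoid fun p q => p = a ∧ q = b

theorem glue_le_iff {a b : F} {T : Setoid F} : glue a b ≤ T ↔ T a b := by
  refine ⟨fun h => h (EqvGen.rel a b ⟨rfl, rfl⟩), fun h => Setoid.eqvGen_le ?_⟩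
  rintro _ _ ⟨rfl, rfl⟩
  exact h

theorem sup_glue_eq_left {R : Setoid F} {a b : F} (h : R a b) : R ⊔ glue a b = R :=
  sup_eq_left.2 (glue_le_iff.2 h)

theorem sup_glue_eq_ker_update (R : Setoid F) (a b : F) [DecidableEq (Quotient R)] :
    R ⊔ glue a b =
      Setoid.ker fun p => Function.update id (Quotient.mk R b) (Quotient.mk R a) ⟦p⟧ := by
  apply le_antisymm
  · refine sup_le (fun {p q} hpq => ?_) (glue_le_iff.2 ?_)
    · exact congrArg _ (Quotient.sound hpq)
    · by_cases hab : Quotient.mk R a = Quotient.mk R b <;>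
        simp [Setoid.ker_def, hab]
  · intro p q hpq
    let toSup : Quotient R → Quotient (R ⊔ glue a b) := Setoid.map_of_le le_sup_left
    have toSup_update (r : F) :
        toSup (Function.update id (Quotient.mk R b) (Quotient.mk R a) ⟦r⟧) = ⟦r⟧ := by
      by_cases hr : Quotient.mk R r = Quotient.mk R b
      · have hbr : (R ⊔ glue a b) b r := le_sup_left (a := R) (R.symm' (Quotient.exact hr))
        have hab : (R ⊔ glue a b) a b := glue_le_iff.1 le_sup_right
        rw [hr, Function.update_self]
        exact Quotient.sound ((R ⊔ glue a b).trans' hab hbr)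
      · rw [Function.update_of_ne hr]
        rfl
    refine Quotient.exact ?_
    rw [← toSup_update p, ← toSup_update q]
    exact congrArg toSup hpq

theorem range_update_id {α : Type*} [DecidableEq α] {a b : α} (h : a ≠ b) :
    Set.range (Function.update id b a) = {b}ᶜ := by
  ext c
  refine ⟨?_, fun hc => ⟨c, Function.update_of_ne hc _ _⟩⟩
  rintro ⟨d, rfl⟩
  by_cases hd : d = b <;> simp [hd, h]

theorem card_quotient_eq_card_quotient_sup_glue_add (R : Setoid F) [Finite (Quotient R)]
    (a b : F) [Decidable (R a b)] :
    Nat.card (Quotient R) = Nat.card (Quotient (R ⊔ glue a b)) + if R a b then 0 else 1 := by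
  classical
  split_ifs with hab
  · rw [sup_glue_eq_left hab, add_zero]
  have range_eq : Set.range (fun p =>
      Function.update id (Quotient.mk R b) (Quotient.mk R a) ⟦p⟧) = {Quotient.mk R b}ᶜ := by
    rw [← range_update_id (mt Quotient.exact hab)]
    exact Quotient.mk_surjective.range_comp (Function.update id ⟦b⟧ ⟦a⟧)
  rw [sup_glue_eq_ker_update, Nat.card_congr (Setoid.quotientKerEquivRange _), range_eq,
    Nat.card_coe_set_eq, ← Set.ncard_add_ncard_compl {Quotient.mk R b}, Set.ncard_singleton,
    add_comm]

end Glue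

section Orbits

/-- The relation of lying in the same orbit of the group generated by `S`; its classes are
counted by `orbCount S`. -/
def orbitSetoid (S : Set (Perm F)) : Setoid F :=
  MulAction.orbitRel (Subgroup.closure S) F

theorem mem_orbSet_self (S : Set (Perm F)) (x : F) : x ∈ orbSet S x :=
  MulAction.mem_orbit_self x

theorem mem_orbSet_iff {S : Set (Perm F)} {a b : F} : b ∈ orbSet S a ↔ orbitSetoid S a b :=
  (orbitSetoid S).comm'

theorem orbSet_eq_of_orbitSetoid {S : Set (Perm F)} {a b : F} (h : orbitSetoid S a b) :
    orbSet S a = orbSet S b :=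
  MulAction.orbit_eq_iff.2 h

/-- The subgroup of the permutations that map every class of `T` to itself. -/
def classStabilizer (T : Setoid F) : Subgroup (Perm F) where
  carrier := {g | ∀ a, T a (g a)}
  one_mem' := T.refl'
  mul_mem' hg hh a := T.trans' (hh a) (hg _)
  inv_mem' {g} hg a := T.symm' (by simpa using hg (g⁻¹ a))

theorem orbitSetoid_le_iff {S : Set (Perm F)} {T : Setoid F} :
    orbitSetoid S ≤ T ↔ S ⊆ classStabilizer T := by
  constructor
  · intro h s hs a
    exact h ((orbitSetoid S).symm' ⟨⟨s, Subgroup.subset_closure hs⟩, rfl⟩)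
  · rintro h _ b ⟨⟨g, hg⟩, rfl⟩
    exact T.symm' ((Subgroup.closure_le _).2 h hg b)

theorem orbitSetoid_apply {S : Set (Perm F)} {s : Perm F} (hs : s ∈ S) (a : F) :
    orbitSetoid S a (s a) :=
  orbitSetoid_le_iff.1 le_rfl hs a

theorem orbitSetoid_mono {S S' : Set (Perm F)} (h : S ⊆ S') : orbitSetoid S ≤ orbitSetoid S' :=
  orbitSetoid_le_iff.2 fun _ hs => orbitSetoid_apply (h hs)

theorem mem_iff_mem_of_orbitSetoid {S : Set (Perm F)} {A : Set F}
    (hA : ∀ s ∈ S, ∀ a, s a ∈ A ↔ a ∈ A) {a b : F} (hab : orbitSetoid S a b) :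
    a ∈ A ↔ b ∈ A := by
  have : orbitSetoid S ≤ Setoid.ker (· ∈ A) :=
    orbitSetoid_le_iff.2 fun s hs a => propext (hA s hs a).symm
  exact iff_of_eq (this hab)

theorem mem_of_orbitSetoid_pair {α β : Perm F} (hα : FPF α) (hβ : FPF β) {A : Set F}
    (hαA : Set.MapsTo α A A) (hβA : Set.MapsTo β A A) {a b : F} (hab : orbitSetoid {α, β} a b)
    (ha : a ∈ A) : b ∈ A := by
  refine (mem_iff_mem_of_orbitSetoid ?_ hab).1 ha
  rintro s (rfl | rfl) c
  exacts [hα.apply_mem_iff hαA, hβ.apply_mem_iff hβA]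

theorem mapsTo_orbSet {S : Set (Perm F)} {s : Perm F} (hs : s ∈ S) (x : F) :
    Set.MapsTo s (orbSet S x) (orbSet S x) := fun a ha =>
  mem_orbSet_iff.2 ((orbitSetoid S).trans' (mem_orbSet_iff.1 ha) (orbitSetoid_apply hs a))

end Orbits

section ConjSwap

variable [DecidableEq F] (φ : Perm F) (S : Set (Perm F)) (a b : F)

theorem swap_mem_classStabilizer {T : Setoid F} {a b : F} (h : T a b) :
    swap a b ∈ classStabilizer T := by
  intro c
  rw [swap_apply_def]
  split_ifs with hca hcb
  · exact hca ▸ h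
  · exact hcb ▸ T.symm' h
  · exact T.refl' c

theorem orbitSetoid_insert_conj_swap_le :
    orbitSetoid (insert (swap a b * φ * (swap a b)⁻¹) S) ≤
      orbitSetoid (insert φ S) ⊔ glue a b := by
  have hswap : swap a b ∈ classStabilizer (orbitSetoid (insert φ S) ⊔ glue a b) :=
    swap_mem_classStabilizer (glue_le_iff.1 le_sup_right)
  obtain ⟨hφ, hS⟩ := Set.insert_subset_iff.1 (orbitSetoid_le_iff.1
    (le_sup_left : orbitSetoid (insert φ S) ≤ orbitSetoid (insert φ S) ⊔ glue a b))
  exact orbitSetoid_le_iff.2 (Set.insert_subset_iff.2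
    ⟨mul_mem (mul_mem hswap hφ) (inv_mem hswap), hS⟩)

theorem orbitSetoid_insert_conj_swap_sup_glue :
    orbitSetoid (insert (swap a b * φ * (swap a b)⁻¹) S) ⊔ glue a b =
      orbitSetoid (insert φ S) ⊔ glue a b := by
  refine le_antisymm (sup_le (orbitSetoid_insert_conj_swap_le φ S a b) le_sup_right)
    (sup_le ?_ le_sup_right)
  simpa [mul_assoc] using
    orbitSetoid_insert_conj_swap_le (swap a b * φ * (swap a b)⁻¹) S a b

open Classical in
theorem orbCount_insert_conj_swap_add [Finite F] :
    orbCount (insert (swap a b * φ * (swap a b)⁻¹) S) +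
        (if orbitSetoid (insert φ S) a b then 0 else 1) =
      orbCount (insert φ S) +
        if orbitSetoid (insert (swap a b * φ * (swap a b)⁻¹) S) a b then 0 else 1 := by
  have h₁ := card_quotient_eq_card_quotient_sup_glue_add (orbitSetoid (insert φ S)) a b
  have h₂ := card_quotient_eq_card_quotient_sup_glue_add
    (orbitSetoid (insert (swap a b * φ * (swap a b)⁻¹) S)) a b
  rw [orbitSetoid_insert_conj_swap_sup_glue] at h₂
  change Nat.card (Quotient (orbitSetoid _)) + _ = Nat.card (Quotient (orbitSetoid _)) + _
  omega

variable {φ} {θ : Perm F}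

theorem conj_swap_apply_of_ne {a b c : F} (ha : c ≠ a) (hb : c ≠ b) (hφa : φ c ≠ a)
    (hφb : φ c ≠ b) : (swap a b * φ * (swap a b)⁻¹) c = φ c := by
  rw [swap_inv, Perm.mul_apply, Perm.mul_apply, swap_apply_of_ne_of_ne ha hb,
    swap_apply_of_ne_of_ne hφa hφb]

-- If both fail, the flags reachable from `a` in both ways are paired up by `θ`, while `φ`
-- pairs them up with the single exception of `a`.
theorem orbitSetoid_or_orbitSetoid_conj_swap [Finite F] (hθ : FPF θ) (hφ : FPF φ) (a b : F) :
    orbitSetoid {φ, θ} a b ∨ orbitSetoid {swap a b * φ * (swap a b)⁻¹, θ} a b := by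
  by_contra! ⟨hb, hb'⟩
  set ψ := swap a b * φ * (swap a b)⁻¹ with hψ
  let A := orbSet {φ, θ} a ∩ orbSet {ψ, θ} a
  have a_mem : a ∈ A := ⟨mem_orbSet_self _ a, mem_orbSet_self _ a⟩
  have even_A : Even A.ncard := hθ.even_ncard
    ((mapsTo_orbSet (by simp) a).inter_inter (mapsTo_orbSet (by simp) a))
  have mapsTo_φ : Set.MapsTo φ (A \ {a}) (A \ {a}) := by
    rintro z ⟨⟨hz, hz'⟩, hza : z ≠ a⟩
    have hφz : φ z ∈ orbSet {φ, θ} a := mapsTo_orbSet (by simp) a hz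
    have hψz : ψ z ∈ orbSet {ψ, θ} a := mapsTo_orbSet (by simp) a hz'
    have hzb : z ≠ b := fun h => hb (mem_orbSet_iff.1 (h ▸ hz))
    have hφzb : φ z ≠ b := fun h => hb (mem_orbSet_iff.1 (h ▸ hφz))
    have hφza : φ z ≠ a := by
      intro h
      refine hb' (mem_orbSet_iff.1 ?_)
      simpa [hψ, swap_apply_of_ne_of_ne hza hzb, h] using hψz
    rw [hψ, conj_swap_apply_of_ne hza hzb hφza hφzb] at hψz
    exact ⟨⟨hφz, hψz⟩, hφza⟩
  have even_diff : Even (A \ {a}).ncard := hφ.even_ncard mapsTo_φ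
  rw [← Set.ncard_sdiff_singleton_add_one a_mem] at even_A
  exact Nat.not_even_iff_odd.2 even_diff.add_one even_A

end ConjSwap

theorem genus_eq_orbCount_insert (θ σ φ : Perm F) :
    genus θ σ φ = (orbCount {θ, σ} : ℤ) - orbCount (insert φ {σ}) - orbCount (insert φ {θ}) +
      2 * orbCount (insert φ {θ, σ}) := by
  rw [genus, Set.pair_comm σ φ, Set.pair_comm θ φ, Set.insert_comm φ θ]

theorem orbitSetoid_component_of_face {θ φ : Perm F} {x a : F} (h : orbitSetoid {φ, θ} x a)
    (σ : Perm F) : orbitSetoid {φ, θ, σ} x a :=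
  orbitSetoid_mono (Set.insert_subset_insert (by simp)) h

section Detach

variable [DecidableEq F] {θ σ φ : Perm F} {x a : F}

/-- The permutation `φ` after the end `{x, σ x}` of an edge has been detached from its vertex:
the flags `x` and `σ x` are linked to each other and their former neighbours `φ x` and `φ (σ x)`
to each other. It is `φ` itself if `{x, σ x}` is already alone at its vertex. -/
def detach (σ φ : Perm F) (x : F) : Perm F :=
  swap x (φ (σ x)) * φ * (swap x (φ (σ x)))⁻¹

theorem _root_.FPF.detach (hφ : FPF φ) (σ : Perm F) (x : F) : FPF (detach σ φ x) :=
  hφ.conj _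

theorem detach_eq_self (h : φ (σ x) = x) : detach σ φ x = φ := by
  rw [detach, h, swap_self, ← Perm.one_def, inv_one, one_mul, mul_one]

theorem detach_apply_of_notMem (hφ : FPF φ) (ha : a ∉ ({x, σ x} : Set F))
    (hφa : φ a ∉ ({x, σ x} : Set F)) : detach σ φ x a = φ a := by
  rw [Set.mem_insert_iff, Set.mem_singleton_iff, not_or] at ha hφa
  exact conj_swap_apply_of_ne ha.1 (mt hφ.apply_eq_iff.2 hφa.2) hφa.1 (φ.injective.ne ha.2)

theorem detach_apply_self (hσ : FPF σ) (hφ : FPF φ) (x : F) : detach σ φ x x = σ x := by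
  have hσφ : σ x ≠ φ (σ x) := (hφ.2 _).symm
  simp [detach, hφ.apply_apply, swap_apply_of_ne_of_ne (hσ.2 x) hσφ]

theorem detach_apply_apply (hσ : FPF σ) (hφ : FPF φ) (x : F) : detach σ φ x (σ x) = x :=
  (hφ.detach σ x).apply_eq_iff.2 (detach_apply_self hσ hφ x).symm

theorem detach_eqOn (hσ : FPF σ) (hφ : FPF φ) (x : F) :
    Set.EqOn (detach σ φ x) σ {x, σ x} := by
  rintro _ (rfl | rfl)
  · exact detach_apply_self hσ hφ _
  · rw [detach_apply_apply hσ hφ, hσ.apply_apply]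

theorem mapsTo_detach (hσ : FPF σ) (hφ : FPF φ) (x : F) :
    Set.MapsTo (detach σ φ x) {x, σ x} {x, σ x} :=
  (hσ.mapsTo_pair x).congr (detach_eqOn hσ hφ x).symm

theorem orbitSetoid_detach_vertex_iff (hσ : FPF σ) (hφ : FPF φ) :
    orbitSetoid {detach σ φ x, σ} x (φ (σ x)) ↔ x = φ (σ x) := by
  refine ⟨fun h => ?_, fun h => h ▸ Setoid.refl' _ _⟩
  have mem : φ (σ x) ∈ ({x, σ x} : Set F) := mem_of_orbitSetoid_pair (hφ.detach σ x) hσ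
    (mapsTo_detach hσ hφ x) (hσ.mapsTo_pair x) h (by simp)
  exact (mem.resolve_right (hφ.2 _)).symm

open Classical in
theorem genus_detach [Finite F] (hσ : FPF σ) (hφ : FPF φ) (θ : Perm F) (x : F) :
    genus θ σ (detach σ φ x) = genus θ σ φ - (if x = φ (σ x) then 0 else 1)
      + (if orbitSetoid {φ, θ} x (φ (σ x)) then 0 else 1)
      - (if orbitSetoid {detach σ φ x, θ} x (φ (σ x)) then 0 else 1)
      + 2 * (if orbitSetoid {detach σ φ x, θ, σ} x (φ (σ x)) then 0 else 1) := by
  have orbit_σφ {S : Set (Perm F)} (hS : σ ∈ S) : orbitSetoid (insert φ S) x (φ (σ x)) :=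
    Setoid.trans' _ (orbitSetoid_apply (Set.mem_insert_of_mem _ hS) x)
      (orbitSetoid_apply (Set.mem_insert _ _) _)
  have vertices := orbCount_insert_conj_swap_add φ {σ} x (φ (σ x))
  have faces := orbCount_insert_conj_swap_add φ {θ} x (φ (σ x))
  have components := orbCount_insert_conj_swap_add φ {θ, σ} x (φ (σ x))
  rw [← detach] at vertices faces components
  rw [if_pos (orbit_σφ (by simp))] at vertices components
  simp only [orbitSetoid_detach_vertex_iff hσ hφ] at vertices
  rw [genus_eq_orbCount_insert, genus_eq_orbCount_insert]
  zify at vertices faces components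
  linarith

theorem orbitSetoid_or_orbitSetoid_detach [Finite F] (hθ : FPF θ) (hφ : FPF φ) (σ : Perm F)
    (x : F) : orbitSetoid {φ, θ} x (φ (σ x)) ∨ orbitSetoid {detach σ φ x, θ} x (φ (σ x)) :=
  orbitSetoid_or_orbitSetoid_conj_swap hθ hφ x _

theorem genus_detach_eq_of_ne_face [Finite F] (hθ : FPF θ) (hσ : FPF σ) (hφ : FPF φ)
    (h : ¬ orbitSetoid {φ, θ} x (φ (σ x))) : genus θ σ (detach σ φ x) = genus θ σ φ := by
  have hx : x ≠ φ (σ x) := fun hx => h (hx ▸ Setoid.refl' _ x)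
  have face := (orbitSetoid_or_orbitSetoid_detach hθ hφ σ x).resolve_left h
  rw [genus_detach hσ hφ, if_neg hx, if_neg h, if_pos face,
    if_pos (orbitSetoid_component_of_face face σ)]
  ring

theorem genus_detach_eq_of_ne_component [Finite F] (hθ : FPF θ) (hσ : FPF σ) (hφ : FPF φ)
    (h : ¬ orbitSetoid {detach σ φ x, θ, σ} x (φ (σ x))) :
    genus θ σ (detach σ φ x) = genus θ σ φ := by
  have hx : x ≠ φ (σ x) := fun hx => h (hx ▸ Setoid.refl' _ x)
  have face : ¬ orbitSetoid {detach σ φ x, θ} x (φ (σ x)) := fun hf =>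
    h (orbitSetoid_component_of_face hf σ)
  rw [genus_detach hσ hφ, if_neg hx, if_neg h, if_neg face,
    if_pos ((orbitSetoid_or_orbitSetoid_detach hθ hφ σ x).resolve_right face)]
  ring

theorem genus_detach_le [Finite F] (hθ : FPF θ) (hσ : FPF σ) (hφ : FPF φ) (x : F) :
    genus θ σ (detach σ φ x) ≤ genus θ σ φ := by
  by_cases hx : φ (σ x) = x
  · rw [detach_eq_self hx]
  by_cases component : orbitSetoid {detach σ φ x, θ, σ} x (φ (σ x))
  · rw [genus_detach hσ hφ, if_neg (Ne.symm hx), if_pos component]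
    split_ifs <;> linarith
  · exact (genus_detach_eq_of_ne_component hθ hσ hφ component).le

end Detach

section Restriction

variable {e : Set F}

theorem card_quotient_eq_comap_val_add (R : Setoid F) [Finite (Quotient R)]
    (he : ∀ a b, R a b → (a ∈ e ↔ b ∈ e)) :
    Nat.card (Quotient R) =
      Nat.card (Quotient (R.comap (Subtype.val : {f : F // f ∉ e} → F))) +
        (Quotient.mk R '' e).ncard := by
  have range_eq : Set.range (Quotient.mk R ∘ (Subtype.val : {f : F // f ∉ e} → F)) =
      (Quotient.mk R '' e)ᶜ := by
    ext q
    induction q using Quotient.inductionOn with | _ a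
    constructor
    · rintro ⟨⟨b, hb⟩, hba⟩ ⟨c, hc, hca⟩
      exact hb ((he c b (Quotient.exact (hca.trans hba.symm))).1 hc)
    · exact fun ha => ⟨⟨a, fun hae => ha ⟨a, hae, rfl⟩⟩, rfl⟩
  have card_comap :=
    Nat.card_congr (Setoid.comapQuotientEquiv (Subtype.val : {f // f ∉ e} → F) R)
  rw [card_comap.trans (congrArg (fun A : Set (Quotient R) => Nat.card A) range_eq),
    Nat.card_coe_set_eq, add_comm, Set.ncard_add_ncard_compl]

/-- The members of `S'` are exactly the restrictions of the members of `S` to the complement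
of `e`. -/
def Restricts (S : Set (Perm F)) (S' : Set (Perm {f : F // f ∉ e})) : Prop :=
  (∀ s ∈ S, ∃ s' ∈ S', ∀ a, (s' a : F) = s a) ∧ ∀ s' ∈ S', ∃ s ∈ S, ∀ a, (s' a : F) = s a

variable {S : Set (Perm F)} {S' : Set (Perm {f : F // f ∉ e})}

theorem Restricts.exists_mem_closure (h : Restricts S S') {g : Perm F}
    (hg : g ∈ Subgroup.closure S) : ∃ g' ∈ Subgroup.closure S', ∀ a, (g' a : F) = g a := by
  induction hg using Subgroup.closure_induction with
  | mem s hs =>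
    obtain ⟨s', hs', hss'⟩ := h.1 s hs
    exact ⟨s', Subgroup.subset_closure hs', hss'⟩
  | one => exact ⟨1, one_mem _, fun _ => rfl⟩
  | mul p q _ _ hp hq =>
    obtain ⟨p', hp', hpp'⟩ := hp
    obtain ⟨q', hq', hqq'⟩ := hq
    exact ⟨p' * q', mul_mem hp' hq', fun a => by rw [Perm.mul_apply, hpp', hqq', Perm.mul_apply]⟩
  | inv p _ hp =>
    obtain ⟨p', hp', hpp'⟩ := hp
    exact ⟨p'⁻¹, inv_mem hp', fun a =>
      Perm.eq_inv_iff_eq.2 (by rw [← hpp', ← Perm.mul_apply, mul_inv_cancel, Perm.one_apply])⟩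

theorem Restricts.orbitSetoid_eq (h : Restricts S S') :
    orbitSetoid S' = (orbitSetoid S).comap Subtype.val := by
  apply le_antisymm
  · refine orbitSetoid_le_iff.2 fun s' hs' a => ?_
    obtain ⟨s, hs, hss'⟩ := h.2 s' hs'
    rw [Setoid.comap_rel, hss']
    exact orbitSetoid_apply hs a
  · rintro a b ⟨⟨g, hg⟩, hgb : g b = a⟩
    obtain ⟨g', hg', hgg'⟩ := h.exists_mem_closure hg
    exact ⟨⟨g', hg'⟩, Subtype.ext ((hgg' b).trans hgb)⟩

theorem Restricts.orbCount_eq_add [Finite F] (h : Restricts S S')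
    (he : ∀ s ∈ S, ∀ a, s a ∈ e ↔ a ∈ e) :
    orbCount S = orbCount S' + (Quotient.mk (orbitSetoid S) '' e).ncard := by
  change Nat.card (Quotient (orbitSetoid S)) = Nat.card (Quotient (orbitSetoid S')) + _
  rw [h.orbitSetoid_eq]
  exact card_quotient_eq_comap_val_add _ fun a b => mem_iff_mem_of_orbitSetoid he

end Restriction

section Edge

variable {θ σ φ : Perm F} {x : F}

theorem apply_ne_apply_of_card_eq_four (hθ : FPF θ) (hσ : FPF σ)
    (h4 : Nat.card (orbSet {θ, σ} x) = 4) : θ x ≠ σ x := by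
  intro h
  have mapsTo_σ : Set.MapsTo σ {x, θ x} {x, θ x} := h ▸ hσ.mapsTo_pair x
  have subset : orbSet {θ, σ} x ⊆ {x, θ x} := fun b hb => mem_of_orbitSetoid_pair hθ hσ
    (hθ.mapsTo_pair x) mapsTo_σ (mem_orbSet_iff.1 hb) (by simp)
  have card_le := Set.ncard_le_ncard subset
  rw [Set.ncard_pair (hθ.2 x).symm, ← Nat.card_coe_set_eq, h4] at card_le
  omega

theorem disjoint_ends_of_card_eq_four (hθ : FPF θ) (hσ : FPF σ)
    (h4 : Nat.card (orbSet {θ, σ} x) = 4) : Disjoint ({x, σ x} : Set F) {θ x, σ (θ x)} := by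
  have hne : θ x ≠ σ x := apply_ne_apply_of_card_eq_four hθ hσ h4
  have hne' : σ (θ x) ≠ x := fun h => hne (hσ.apply_eq_iff.1 h)
  simp [hθ.2 x, hne, hne']

theorem orbSet_eq_of_card_eq_four (hθ : FPF θ) (hσ : FPF σ)
    (h4 : Nat.card (orbSet {θ, σ} x) = 4) :
    orbSet {θ, σ} x = {x, σ x} ∪ {θ x, σ (θ x)} := by
  have mem_self := mem_orbSet_self {θ, σ} x
  have mem_θ := mapsTo_orbSet (S := {θ, σ}) (s := θ) (by simp) x
  have mem_σ := mapsTo_orbSet (S := {θ, σ}) (s := σ) (by simp) x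
  rw [Nat.card_coe_set_eq] at h4
  refine (Set.eq_of_subset_of_ncard_le ?_ ?_ (Set.finite_of_ncard_ne_zero (by omega))).symm
  · rintro _ ((rfl | rfl) | (rfl | rfl))
    exacts [mem_self, mem_σ mem_self, mem_θ mem_self, mem_σ (mem_θ mem_self)]
  · rw [h4, Set.ncard_union_eq (disjoint_ends_of_card_eq_four hθ hσ h4),
      Set.ncard_pair (hσ.2 _).symm, Set.ncard_pair (hσ.2 _).symm]

theorem apply_comm_of_card_eq_four (hθ : FPF θ) (hσ : FPF σ)
    (h4 : Nat.card (orbSet {θ, σ} x) = 4) : θ (σ x) = σ (θ x) := by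
  have hne : θ x ≠ σ x := apply_ne_apply_of_card_eq_four hθ hσ h4
  have mem : θ (σ x) ∈ orbSet {θ, σ} x :=
    mapsTo_orbSet (by simp) x (mapsTo_orbSet (by simp) x (mem_orbSet_self _ x))
  rw [orbSet_eq_of_card_eq_four hθ hσ h4] at mem
  rcases mem with (h | h) | (h | h)
  · exact (hne (hθ.apply_eq_iff.1 h).symm).elim
  · exact (hθ.2 _ h).elim
  · exact (hσ.2 _ (θ.injective h)).elim
  · exact h

theorem orbitSetoid_of_mem_edge (hθ : FPF θ) (hσ : FPF σ)
    (h4 : Nat.card (orbSet {θ, σ} x) = 4) {S : Set (Perm F)} (hS : θ ∈ S)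
    (h : orbitSetoid S x (σ x)) {a : F} (ha : a ∈ orbSet {θ, σ} x) : orbitSetoid S a x := by
  rw [orbSet_eq_of_card_eq_four hθ hσ h4] at ha
  apply Setoid.symm'
  rcases ha with (rfl | rfl) | (rfl | rfl)
  · exact Setoid.refl' _ _
  · exact h
  · exact orbitSetoid_apply hS x
  · rw [← apply_comm_of_card_eq_four hθ hσ h4]
    exact Setoid.trans' _ h (orbitSetoid_apply hS _)

theorem ncard_image_mk_edge_eq_one (hθ : FPF θ) (hσ : FPF σ)
    (h4 : Nat.card (orbSet {θ, σ} x) = 4) {S : Set (Perm F)} (hS : θ ∈ S)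
    (h : orbitSetoid S x (σ x)) :
    (Quotient.mk (orbitSetoid S) '' orbSet {θ, σ} x).ncard = 1 := by
  rw [Set.image_congr fun a ha => Quotient.sound (orbitSetoid_of_mem_edge hθ hσ h4 hS h ha),
    Set.Nonempty.image_const ⟨x, mem_orbSet_self _ x⟩, Set.ncard_singleton]

theorem not_orbitSetoid_face_of_card_eq_two (hθ : FPF θ) (hσ : FPF σ)
    (h4 : Nat.card (orbSet {θ, σ} x) = 4)
    (h2 : Nat.card ((fun f => orbSet {θ, φ} f) '' orbSet {θ, σ} x) = 2) :
    ¬ orbitSetoid {φ, θ} x (φ (σ x)) := by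
  intro h
  rw [Set.pair_comm] at h
  have same_face : orbitSetoid {θ, φ} x (σ x) :=
    Setoid.trans' _ h (Setoid.symm' _ (orbitSetoid_apply (by simp) _))
  rw [Set.image_congr fun a ha => orbSet_eq_of_orbitSetoid
      (orbitSetoid_of_mem_edge hθ hσ h4 (by simp) same_face ha),
    Set.Nonempty.image_const ⟨x, mem_orbSet_self _ x⟩] at h2
  simp at h2

theorem ncard_image_mk_edge_eq_two (hθ : FPF θ) (hσ : FPF σ)
    (h4 : Nat.card (orbSet {θ, σ} x) = 4) (hφ : FPF φ)
    (hφσ : Set.EqOn φ σ (orbSet {θ, σ} x)) :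
    (Quotient.mk (orbitSetoid {φ, σ}) '' orbSet {θ, σ} x).ncard = 2 := by
  have disjoint := disjoint_ends_of_card_eq_four hθ hσ h4
  rw [orbSet_eq_of_card_eq_four hθ hσ h4] at hφσ ⊢
  have mk_σ (a : F) : Quotient.mk (orbitSetoid {φ, σ}) (σ a) = ⟦a⟧ :=
    Quotient.sound (Setoid.symm' _ (orbitSetoid_apply (by simp) a))
  have mk_ne : Quotient.mk (orbitSetoid {φ, σ}) x ≠ ⟦θ x⟧ := by
    intro h
    have mapsTo_φ : Set.MapsTo φ {x, σ x} {x, σ x} :=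
      (hσ.mapsTo_pair x).congr (hφσ.mono Set.subset_union_left).symm
    have mem : θ x ∈ ({x, σ x} : Set F) := mem_of_orbitSetoid_pair hφ hσ mapsTo_φ
      (hσ.mapsTo_pair x) (Quotient.exact h) (by simp)
    exact disjoint.notMem_of_mem_left mem (by simp)
  rw [Set.image_union, Set.image_pair, Set.image_pair, mk_σ, mk_σ, Set.pair_eq_singleton,
    Set.pair_eq_singleton, Set.singleton_union, Set.ncard_pair mk_ne]

-- The deleted component is a single edge embedded in the sphere: two vertices, one face.
theorem genus_restrict [Finite F] (hθ : FPF θ) (hσ : FPF σ) (hφ : FPF φ)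
    (h4 : Nat.card (orbSet {θ, σ} x) = 4) (hφσ : Set.EqOn φ σ (orbSet {θ, σ} x))
    {θ' σ' φ' : Perm {f : F // f ∉ orbSet {θ, σ} x}} (hθ' : ∀ a, (θ' a : F) = θ a)
    (hσ' : ∀ a, (σ' a : F) = σ a) (hφ' : ∀ a, (φ' a : F) = φ a) :
    genus θ' σ' φ' = genus θ σ φ := by
  have mapsTo_σ : Set.MapsTo σ (orbSet {θ, σ} x) (orbSet {θ, σ} x) := mapsTo_orbSet (by simp) x
  have mem_σ (a : F) := hσ.apply_mem_iff mapsTo_σ (a := a)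
  have mem_θ (a : F) := hθ.apply_mem_iff (mapsTo_orbSet (S := {θ, σ}) (by simp) x) (a := a)
  have mem_φ (a : F) := hφ.apply_mem_iff (mapsTo_σ.congr hφσ.symm) (a := a)
  have edges : orbCount {θ, σ} = orbCount {θ', σ'} + 1 := by
    rw [Restricts.orbCount_eq_add (S := {θ, σ}) (S' := {θ', σ'}) (by simp [Restricts, *])
      (by simp [*]), ncard_image_mk_edge_eq_one hθ hσ h4 (by simp) (orbitSetoid_apply (by simp) x)]
  have vertices : orbCount {φ, σ} = orbCount {φ', σ'} + 2 := by
    rw [Restricts.orbCount_eq_add (S := {φ, σ}) (S' := {φ', σ'}) (by simp [Restricts, *])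
      (by simp [*]), ncard_image_mk_edge_eq_two hθ hσ h4 hφ hφσ]
  have faces : orbCount {φ, θ} = orbCount {φ', θ'} + 1 := by
    rw [Restricts.orbCount_eq_add (S := {φ, θ}) (S' := {φ', θ'}) (by simp [Restricts, *])
      (by simp [*]), ncard_image_mk_edge_eq_one hθ hσ h4 (by simp)
        (hφσ (mem_orbSet_self _ x) ▸ orbitSetoid_apply (by simp) x)]
  have components : orbCount {φ, θ, σ} = orbCount {φ', θ', σ'} + 1 := by
    rw [Restricts.orbCount_eq_add (S := {φ, θ, σ}) (S' := {φ', θ', σ'}) (by simp [Restricts, *])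
      (by simp [*]), ncard_image_mk_edge_eq_one hθ hσ h4 (by simp) (orbitSetoid_apply (by simp) x)]
  rw [genus_eq_orbCount_insert, genus_eq_orbCount_insert, edges, vertices, faces, components]
  push_cast
  ring

end Edge

section DetachEdge

variable [DecidableEq F] {θ σ φ : Perm F} {x : F}

/-- The permutation `φ` after both ends of the edge `orbSet {θ, σ} x` have been detached from
their vertices, which makes this edge a component of its own. -/
def detachEdge (θ σ φ : Perm F) (x : F) : Perm F :=
  detach σ (detach σ φ x) (θ x)

theorem _root_.FPF.detachEdge (hφ : FPF φ) (θ σ : Perm F) (x : F) : FPF (detachEdge θ σ φ x) :=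
  (hφ.detach σ x).detach σ (θ x)

theorem detachEdge_eqOn (hθ : FPF θ) (hσ : FPF σ) (hφ : FPF φ)
    (h4 : Nat.card (orbSet {θ, σ} x) = 4) :
    Set.EqOn (detachEdge θ σ φ x) σ (orbSet {θ, σ} x) := by
  have disjoint := disjoint_ends_of_card_eq_four hθ hσ h4
  rw [orbSet_eq_of_card_eq_four hθ hσ h4, Set.eqOn_union]
  refine ⟨fun a ha => ?_, detach_eqOn hσ (hφ.detach σ x) (θ x)⟩
  rw [detachEdge, detach_apply_of_notMem (hφ.detach σ x) (disjoint.notMem_of_mem_left ha)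
    (disjoint.notMem_of_mem_left (mapsTo_detach hσ hφ x ha)), detach_eqOn hσ hφ x ha]

theorem mapsTo_detachEdge (hθ : FPF θ) (hσ : FPF σ) (hφ : FPF φ)
    (h4 : Nat.card (orbSet {θ, σ} x) = 4) :
    Set.MapsTo (detachEdge θ σ φ x) (orbSet {θ, σ} x) (orbSet {θ, σ} x) :=
  (mapsTo_orbSet (by simp) x).congr (detachEdge_eqOn hθ hσ hφ h4).symm

theorem genus_detachEdge [Finite F] (hθ : FPF θ) (hσ : FPF σ) (hφ : FPF φ)
    (h4 : Nat.card (orbSet {θ, σ} x) = 4) :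
    genus θ σ (detachEdge θ σ φ x) = genus θ σ (detach σ φ x) := by
  have hφ₁ : FPF (detach σ φ x) := hφ.detach σ x
  by_cases alone : detach σ φ x (σ (θ x)) = θ x
  · rw [detachEdge, detach_eq_self alone]
  refine genus_detach_eq_of_ne_component hθ hσ hφ₁ fun component => ?_
  have mem_edge : θ x ∈ orbSet {θ, σ} x :=
    mapsTo_orbSet (by simp) x (mem_orbSet_self _ x)
  have mem : detach σ φ x (σ (θ x)) ∈ orbSet {θ, σ} x := by
    refine (mem_iff_mem_of_orbitSetoid ?_ component).1 mem_edge
    rintro s (rfl | rfl | rfl) a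
    exacts [(hφ.detachEdge θ σ x).apply_mem_iff (mapsTo_detachEdge hθ hσ hφ h4),
      hθ.apply_mem_iff (mapsTo_orbSet (by simp) x), hσ.apply_mem_iff (mapsTo_orbSet (by simp) x)]
  rw [orbSet_eq_of_card_eq_four hθ hσ h4] at mem
  rcases mem with mem | mem
  · refine (disjoint_ends_of_card_eq_four hθ hσ h4).notMem_of_mem_left ?_ (.inr rfl)
    exact (hφ₁.apply_mem_iff (mapsTo_detach hσ hφ x)).1 mem
  · exact mem.elim alone (hφ₁.2 _)

end DetachEdge

section Deletion

/-- One step of the walk `φ * σ` round a vertex, allowed only at flags of `e`: the deletion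
of `e` sends `a` to the end of the longest such walk starting at `φ a`. -/
def Skip (σ φ : Perm F) (e : Set F) (b c : F) : Prop :=
  b ∈ e ∧ φ (σ b) = c

variable {θ σ φ : Perm F} {e : Set F} {x a b c : F}

theorem reflTransGen_skip_pow {m : ℕ} (h : ∀ j < m, ((φ * σ) ^ j) a ∈ e) :
    ReflTransGen (Skip σ φ e) a (((φ * σ) ^ m) a) := by
  induction m with
  | zero => exact .refl
  | succ m ih =>
    refine (ih fun j hj => h j (hj.trans m.lt_succ_self)).tail ⟨h m m.lt_succ_self, ?_⟩
    rw [pow_succ', Perm.mul_apply, Perm.mul_apply]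

theorem eq_of_reflTransGen_skip (hb : b ∉ e) (hc : c ∉ e) (hab : ReflTransGen (Skip σ φ e) a b)
    (hac : ReflTransGen (Skip σ φ e) a c) : b = c := by
  have stuck {y z : F} (hy : y ∉ e) (hyz : ReflTransGen (Skip σ φ e) y z) : y = z :=
    hyz.cases_head.resolve_right fun ⟨_, step, _⟩ => hy step.1
  have unique : Relator.RightUnique (Skip σ φ e) := fun _ _ _ h h' => h.2.symm.trans h'.2
  rcases hab.total_of_right_unique unique hac with hbc | hcb
  exacts [stuck hb hbc, (stuck hc hcb).symm]

variable [DecidableEq F]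

theorem reflGen_skip_detach (hσ : FPF σ) (hφ : FPF φ) (ha : a ∉ ({x, σ x} : Set F)) :
    ReflGen (Skip σ φ {x, σ x}) (φ a) (detach σ φ x a) := by
  by_cases hφa : φ a ∈ ({x, σ x} : Set F)
  · refine .single ⟨hφa, ?_⟩
    rw [Set.mem_insert_iff, Set.mem_singleton_iff, not_or] at ha
    have hne : φ x ≠ φ (σ x) := φ.injective.ne (hσ.2 x).symm
    rcases hφa with h | h
    · have a_eq : a = φ x := hφ.apply_eq_iff.1 h
      rw [detach, swap_inv, Perm.mul_apply, Perm.mul_apply,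
        swap_apply_of_ne_of_ne ha.1 (a_eq ▸ hne), h, swap_apply_left]
    · have a_eq : a = φ (σ x) := hφ.apply_eq_iff.1 h
      rw [h, hσ.apply_apply, a_eq, detach, swap_inv, Perm.mul_apply, Perm.mul_apply,
        swap_apply_right, swap_apply_of_ne_of_ne (hφ.2 x) hne]
  · rw [detach_apply_of_notMem hφ ha hφa]

theorem reflTransGen_skip_detachEdge (hθ : FPF θ) (hσ : FPF σ) (hφ : FPF φ)
    (h4 : Nat.card (orbSet {θ, σ} x) = 4) (ha : a ∉ orbSet {θ, σ} x) :
    ReflTransGen (Skip σ φ (orbSet {θ, σ} x)) (φ a) (detachEdge θ σ φ x a) := by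
  have disjoint := disjoint_ends_of_card_eq_four hθ hσ h4
  rw [orbSet_eq_of_card_eq_four hθ hσ h4] at ha ⊢
  have first {c : F} (hc : c ∉ ({x, σ x} : Set F)) :
      ReflTransGen (Skip σ φ ({x, σ x} ∪ {θ x, σ (θ x)})) (φ c) (detach σ φ x c) :=
    (reflGen_skip_detach hσ hφ hc).to_reflTransGen.lift id fun _ _ h => ⟨.inl h.1, h.2⟩
  refine (first fun h => ha (.inl h)).trans ?_
  have second := reflGen_skip_detach hσ (hφ.detach σ x) fun h => ha (.inr h)
  rcases (reflGen_iff _ _ _).1 second with eq | ⟨mem, eq⟩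
  · rw [detachEdge, eq]
  · rw [detachEdge, ← eq]
    exact .head ⟨.inr mem, rfl⟩
      (first (disjoint.notMem_of_mem_right (hσ.mapsTo_pair (θ x) mem)))

theorem eq_detachEdge_of_isEdgeDeletion (hθ : FPF θ) (hσ : FPF σ) (hφ : FPF φ)
    (h4 : Nat.card (orbSet {θ, σ} x) = 4)
    {θ' σ' φ' : Perm {f : F // f ∉ orbSet {θ, σ} x}}
    (h : IsEdgeDeletion σ φ (orbSet {θ, σ} x) θ' σ' φ' θ) (a) :
    (φ' a : F) = detachEdge θ σ φ x a := by
  obtain ⟨m, notMem, mem, eq⟩ := h.2 a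
  rw [eq]
  exact eq_of_reflTransGen_skip notMem
    (mt ((hφ.detachEdge θ σ x).apply_mem_iff (mapsTo_detachEdge hθ hσ hφ h4)).1 a.2)
    (reflTransGen_skip_pow mem) (reflTransGen_skip_detachEdge hθ hσ hφ h4 a.2)

theorem genus_eq_genus_detach_of_isEdgeDeletion [Finite F] (hθ : FPF θ) (hσ : FPF σ) (hφ : FPF φ)
    (h4 : Nat.card (orbSet {θ, σ} x) = 4)
    {θ' σ' φ' : Perm {f : F // f ∉ orbSet {θ, σ} x}}
    (h : IsEdgeDeletion σ φ (orbSet {θ, σ} x) θ' σ' φ' θ) :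
    genus θ' σ' φ' = genus θ σ (detach σ φ x) := by
  rw [← genus_detachEdge hθ hσ hφ h4]
  exact genus_restrict hθ hσ (hφ.detachEdge θ σ x) h4 (detachEdge_eqOn hθ hσ hφ h4)
    (fun a => (h.1 a).1) (fun a => (h.1 a).2) (eq_detachEdge_of_isEdgeDeletion hθ hσ hφ h4 h)

end Deletion

end GraphEmbedding

open GraphEmbedding in
theorem stmt10_general {F : Type*} [Finite F] {θ₀ σ₀ φ₀ : Equiv.Perm F}
    (hθ₀ : FPF θ₀) (hσ₀ : FPF σ₀) (hφ₀ : FPF φ₀) {x : F}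
    (h4 : Nat.card (orbSet {θ₀, σ₀} x) = 4)
    {θ σ' φ' : Equiv.Perm {f : F // f ∉ orbSet {θ₀, σ₀} x}}
    (hdraw : IsEdgeDeletion σ₀ φ₀ (orbSet {θ₀, σ₀} x) θ σ' φ' θ₀) :
    genus θ σ' φ' ≤ genus θ₀ σ₀ φ₀ ∧
    (Nat.card ((fun f => orbSet {θ₀, φ₀} f) '' orbSet {θ₀, σ₀} x) = 2 →
      genus θ₀ σ₀ φ₀ = genus θ σ' φ') := by
  classical
  rw [genus_eq_genus_detach_of_isEdgeDeletion hθ₀ hσ₀ hφ₀ h4 hdraw]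
  refine ⟨genus_detach_le hθ₀ hσ₀ hφ₀ x, fun h2 => ?_⟩
  exact (genus_detach_eq_of_ne_face hθ₀ hσ₀ hφ₀
    (not_orbitSetoid_face_of_card_eq_two hθ₀ hσ₀ h4 h2)).symm

/-- `E₀ = (θ₀, σ₀, φ₀)` on `F` is obtained from `E = (θ, σ, φ)` on the complement of `e`
by drawing the new edge `e`; equivalently, `E` is obtained from `E₀` by deleting `e`.
The new edge is drawn along the boundary of a face exactly when, in the resulting
embedding, it is incident with two distinct faces. -/
theorem stmt10 {F : Type*} [Fintype F]
    (θ₀ σ₀ φ₀ : Equiv.Perm F) (h0 : IsGraphEmb θ₀ σ₀ φ₀) (x : F)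
    (e : Set F) (he : e = orbSet {θ₀, σ₀} x)
    (θ σ' φ' : Equiv.Perm {f : F // f ∉ e})
    (hdraw : IsEdgeDeletion σ₀ φ₀ e θ σ' φ' θ₀) :
    genus θ σ' φ' ≤ genus θ₀ σ₀ φ₀ ∧
    (Nat.card ((fun f => orbSet {θ₀, φ₀} f) '' e) = 2 →
      genus θ₀ σ₀ φ₀ = genus θ σ' φ') := by
  subst he
  exact stmt10_general h0.1 h0.2.1 h0.2.2.1 (h0.2.2.2 x) hdraw
end
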